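/- (Weyl orbit of I_zS_z.) The intersection of the adjoint orbit {(k₁⊗k₂)⁻¹ (i I_zS_z) (k₁⊗k₂) : k₁, k₂ ∈ SU(2)} with the abelian subalgebra 𝔥 = span_ℝ{iI_xS_x, iI_yS_y, iI_zS_z} is exactly the six-element set {±iI_xS_x, ±iI_yS_y, ±iI_zS_z}. -/

import Mathlib

open Kronecker
open scoped Matrix

/-- One half times the Pauli matrix `σ_x`. -/
noncomputable def pax : Matrix (Fin 2) (Fin 2) ℂ := (1 / 2 : ℂ) • !![0, 1; 1, 0]

/-- One half times the Pauli matrix `σ_y`. -/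
noncomputable def pay : Matrix (Fin 2) (Fin 2) ℂ :=
  (1 / 2 : ℂ) • !![0, -Complex.I; Complex.I, 0]

/-- One half times the Pauli matrix `σ_z`. -/
noncomputable def paz : Matrix (Fin 2) (Fin 2) ℂ := (1 / 2 : ℂ) • !![1, 0; 0, -1]

/-- The three spin-1/2 operators, indexed by `Fin 3` (`0 ↦ x`, `1 ↦ y`, `2 ↦ z`). -/
noncomputable def pauli : Fin 3 → Matrix (Fin 2) (Fin 2) ℂ := ![pax, pay, paz]

/-- The first-spin operators `I_α = σ_α ⊗ 1`. -/
noncomputable def Iop (a : Fin 3) : Matrix (Fin 2 × Fin 2) (Fin 2 × Fin 2) ℂ :=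
  pauli a ⊗ₖ (1 : Matrix (Fin 2) (Fin 2) ℂ)

/-- The second-spin operators `S_α = 1 ⊗ σ_α`. -/
noncomputable def Sop (a : Fin 3) : Matrix (Fin 2 × Fin 2) (Fin 2 × Fin 2) ℂ :=
  (1 : Matrix (Fin 2) (Fin 2) ℂ) ⊗ₖ pauli a

noncomputable abbrev Ix' := Iop 0
noncomputable abbrev Iy' := Iop 1
noncomputable abbrev Iz' := Iop 2
noncomputable abbrev Sx' := Sop 0
noncomputable abbrev Sy' := Sop 1
noncomputable abbrev Sz' := Sop 2

/-- The subgroup `K = {k₁ ⊗ k₂ : k₁, k₂ ∈ SU(2)}` of `SU(4)`. -/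
def K2 : Set (Matrix (Fin 2 × Fin 2) (Fin 2 × Fin 2) ℂ) :=
  {g | ∃ k₁ ∈ Matrix.specialUnitaryGroup (Fin 2) ℂ,
       ∃ k₂ ∈ Matrix.specialUnitaryGroup (Fin 2) ℂ, g = k₁ ⊗ₖ k₂}

/-- The directions `i I_αS_α` (for `α = x,y,z`) spanning the abelian subalgebra
`𝔥 = span_ℝ{iI_xS_x, iI_yS_y, iI_zS_z}`. -/
noncomputable def hbasis (a : Fin 3) : Matrix (Fin 2 × Fin 2) (Fin 2 × Fin 2) ℂ :=
  Complex.I • (Iop a * Sop a)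

/-- The adjoint orbit `{(k₁⊗k₂)⁻¹ (i I_zS_z) (k₁⊗k₂) : k₁, k₂ ∈ SU(2)}`. -/
def adOrbitIzSz : Set (Matrix (Fin 2 × Fin 2) (Fin 2 × Fin 2) ℂ) :=
  {A | ∃ k₁ ∈ Matrix.specialUnitaryGroup (Fin 2) ℂ,
       ∃ k₂ ∈ Matrix.specialUnitaryGroup (Fin 2) ℂ,
       A = (k₁ ⊗ₖ k₂)⁻¹ * (Complex.I • (Iz' * Sz')) * (k₁ ⊗ₖ k₂)}

/-!
Conjugates of `σ_z` have a coordinate vector of square length one in the basis `σ_x, σ_y, σ_z`.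
If `M` and `N` have coordinates `u` and `v`, then `M ⊗ N` has coordinates `u_a v_b` in the basis
`σ_a ⊗ σ_b`, so `i M ⊗ N` lies in `𝔥` only if the rank-one matrix `u vᵀ` is diagonal. As `u` and `v`
have square length one, this forces `u` and `v` to be `±e_a` for one and the same `a`.
Conversely, `SU(2)` acts transitively on the sphere of Hermitian matrices of trace zero and given
length, which contains all `±σ_a`.
-/

section FinThree

variable {α : Type*} (f : Fin 3 → α)

theorem range_fin_three : Set.range f = {f 0, f 1, f 2} := by
  ext x
  simp [Fin.exists_fin_succ, eq_comm]

theorem setOf_exists_eq_or_eq_neg_fin_three [Neg α] :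
    {x | ∃ a, x = f a ∨ x = -f a} = {f 0, -f 0, f 1, -f 1, f 2, -f 2} := by
  ext x
  simp [Fin.exists_fin_succ, or_assoc]

end FinThree

theorem exists_sq_eq_one_of_vecMulVec_eq_diagonal {ι R : Type*} [Fintype ι] [DecidableEq ι]
    [CommRing R] [IsDomain R] {u v c : ι → R} (hu : u ⬝ᵥ u = 1) (hv : v ⬝ᵥ v = 1)
    (huv : Matrix.vecMulVec u v = Matrix.diagonal c) :
    ∃ a, c a ^ 2 = 1 ∧ ∀ b ≠ a, c b = 0 := by
  have hdiag (b : ι) : u b * v b = c b := by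
    simpa [Matrix.vecMulVec_apply] using congrFun₂ huv b b
  have hoff {a b : ι} (hab : a ≠ b) : u a * v b = 0 := by
    simpa [Matrix.vecMulVec_apply, hab] using congrFun₂ huv a b
  obtain ⟨a, ha⟩ : ∃ a, u a ≠ 0 := by
    by_contra! h
    simp [dotProduct, h] at hu
  have hv_off (b : ι) (hb : b ≠ a) : v b = 0 := (mul_eq_zero.1 (hoff hb.symm)).resolve_left ha
  have hva : v a * v a = 1 := by
    rwa [dotProduct, Fintype.sum_eq_single a fun b hb => by rw [hv_off b hb, zero_mul]] at hv
  have hu_off (b : ι) (hb : b ≠ a) : u b = 0 :=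
    (mul_eq_zero.1 (hoff hb)).resolve_right (left_ne_zero_of_mul_eq_one hva)
  have hua : u a * u a = 1 := by
    rwa [dotProduct, Fintype.sum_eq_single a fun b hb => by rw [hu_off b hb, zero_mul]] at hu
  refine ⟨a, ?_, fun b hb => by rw [← hdiag, hu_off b hb, zero_mul]⟩
  rw [← hdiag, mul_pow, sq, sq, hua, hva, one_mul]

theorem isUnit_of_mem_specialUnitaryGroup {n R : Type*} [Fintype n] [DecidableEq n] [CommRing R]
    [StarRing R] {k : Matrix n n R} (hk : k ∈ Matrix.specialUnitaryGroup n R) : IsUnit k := by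
  rw [Matrix.isUnit_iff_isUnit_det, (Matrix.mem_specialUnitaryGroup_iff.1 hk).2]
  exact isUnit_one

theorem of_mem_specialUnitaryGroup_fin_two {R : Type*} [CommRing R] [StarRing R] {a b : R}
    (h : a * star a + b * star b = 1) :
    !![a, b; -star b, star a] ∈ Matrix.specialUnitaryGroup (Fin 2) R := by
  have hdet : !![a, b; -star b, star a].det = 1 := by
    rw [Matrix.det_fin_two_of]
    linear_combination h
  have hstar : star !![a, b; -star b, star a] = !![a, b; -star b, star a].adjugate := by
    ext i j
    fin_cases i <;> fin_cases j <;> simp [Matrix.star_apply, Matrix.adjugate_fin_two]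
  rw [Matrix.mem_specialUnitaryGroup_iff, Matrix.mem_unitaryGroup_iff, hstar,
    Matrix.mul_adjugate, hdet, one_smul]
  exact ⟨rfl, rfl⟩

theorem isHermitian_pauli (a : Fin 3) : (pauli a).IsHermitian := by
  ext i j
  fin_cases a <;> fin_cases i <;> fin_cases j <;> simp [pauli, pax, pay, paz]

theorem trace_pauli (a : Fin 3) : (pauli a).trace = 0 := by
  fin_cases a <;> simp [pauli, pax, pay, paz, Matrix.trace_fin_two]

theorem trace_pauli_mul_pauli (a b : Fin 3) :
    (pauli a * pauli b).trace = if a = b then 1 / 2 else 0 := by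
  fin_cases a <;> fin_cases b <;>
    norm_num [pauli, pax, pay, paz, Matrix.trace_fin_two, Matrix.mul_apply, mul_assoc,
      mul_left_comm Complex.I]

/-- The coordinates of the trace-free part of a `2 × 2` matrix in the basis `σ_x, σ_y, σ_z`,
extracted by means of the trace form. The coordinates are real if the matrix is Hermitian. -/
noncomputable def pauliCoord (M : Matrix (Fin 2) (Fin 2) ℂ) (a : Fin 3) : ℂ :=
  2 * (M * pauli a).trace

theorem pauliCoord_pauli (a : Fin 3) : pauliCoord (pauli a) = Pi.single a 1 := by
  ext b
  simp [pauliCoord, trace_pauli_mul_pauli, Pi.single_apply, eq_comm]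

theorem pauliCoord_eq (M : Matrix (Fin 2) (Fin 2) ℂ) :
    pauliCoord M = ![M 0 1 + M 1 0, Complex.I * (M 0 1 - M 1 0), M 0 0 - M 1 1] := by
  ext a
  fin_cases a <;>
    simp [pauliCoord, pauli, pax, pay, paz, Matrix.trace_fin_two, Matrix.mul_apply] <;> ring

theorem pauliCoord_dotProduct (M N : Matrix (Fin 2) (Fin 2) ℂ) :
    pauliCoord M ⬝ᵥ pauliCoord N = 2 * (M * N).trace - M.trace * N.trace := by
  rw [pauliCoord_eq, pauliCoord_eq, Matrix.vec3_dotProduct']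
  simp only [Matrix.trace_fin_two, Matrix.mul_apply, Fin.sum_univ_two]
  linear_combination (M 0 1 - M 1 0) * (N 0 1 - N 1 0) * Complex.I_sq

theorem pauliCoord_conj_dotProduct {k : Matrix (Fin 2) (Fin 2) ℂ} (hk : IsUnit k)
    (M N : Matrix (Fin 2) (Fin 2) ℂ) :
    pauliCoord (k⁻¹ * M * k) ⬝ᵥ pauliCoord (k⁻¹ * N * k) = pauliCoord M ⬝ᵥ pauliCoord N := by
  have hmul : k⁻¹ * M * k * (k⁻¹ * N * k) = k⁻¹ * (M * N) * k := by
    have := Matrix.mul_nonsing_inv k ((Matrix.isUnit_iff_isUnit_det k).1 hk)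
    grind
  simp only [pauliCoord_dotProduct, hmul, Matrix.trace_conj' hk]

theorem pauliCoord_conj_paz_dotProduct_self {k : Matrix (Fin 2) (Fin 2) ℂ} (hk : IsUnit k) :
    pauliCoord (k⁻¹ * paz * k) ⬝ᵥ pauliCoord (k⁻¹ * paz * k) = 1 := by
  rw [pauliCoord_conj_dotProduct hk, show paz = pauli 2 from rfl, pauliCoord_pauli]
  simp

theorem vecMulVec_pauliCoord_apply (M N : Matrix (Fin 2) (Fin 2) ℂ) (a b : Fin 3) :
    Matrix.vecMulVec (pauliCoord M) (pauliCoord N) a b =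
      4 * ((M ⊗ₖ N) * (pauli a ⊗ₖ pauli b)).trace := by
  rw [← Matrix.mul_kronecker_mul, Matrix.trace_kronecker, Matrix.vecMulVec_apply, pauliCoord,
    pauliCoord]
  ring

theorem vecMulVec_pauliCoord_eq_diagonal {M N : Matrix (Fin 2) (Fin 2) ℂ} {c : Fin 3 → ℂ}
    (h : M ⊗ₖ N = ∑ a, c a • (pauli a ⊗ₖ pauli a)) :
    Matrix.vecMulVec (pauliCoord M) (pauliCoord N) = Matrix.diagonal c := by
  ext a b
  have hpauli (x : Fin 3) : 4 * ((pauli x ⊗ₖ pauli x) * (pauli a ⊗ₖ pauli b)).trace =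
      (Pi.single x 1 : Fin 3 → ℂ) a * (Pi.single x 1 : Fin 3 → ℂ) b := by
    rw [← vecMulVec_pauliCoord_apply, Matrix.vecMulVec_apply, pauliCoord_pauli]
  calc Matrix.vecMulVec (pauliCoord M) (pauliCoord N) a b
      = ∑ x, c x * (4 * ((pauli x ⊗ₖ pauli x) * (pauli a ⊗ₖ pauli b)).trace) := by
        simp [vecMulVec_pauliCoord_apply, h, Finset.sum_mul, Finset.mul_sum, Matrix.trace_sum,
          mul_left_comm]
    _ = ∑ x, c x * ((Pi.single x 1 : Fin 3 → ℂ) a * (Pi.single x 1 : Fin 3 → ℂ) b) := by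
        simp only [hpauli]
    _ = Matrix.diagonal c a b := by
        rcases eq_or_ne a b with rfl | hab <;> simp [Pi.single_apply, *]

theorem hbasis_eq_smul_kronecker (a : Fin 3) :
    hbasis a = Complex.I • (pauli a ⊗ₖ pauli a) := by
  rw [hbasis, Iop, Sop, ← Matrix.mul_kronecker_mul, mul_one, one_mul]

theorem smul_kronecker_eq_sum_smul_hbasis_iff {M N : Matrix (Fin 2) (Fin 2) ℂ} {c : Fin 3 → ℝ} :
    Complex.I • (M ⊗ₖ N) = ∑ a, c a • hbasis a ↔
      M ⊗ₖ N = ∑ a, (c a : ℂ) • (pauli a ⊗ₖ pauli a) := by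
  have hterm (a : Fin 3) : c a • hbasis a = Complex.I • (c a : ℂ) • (pauli a ⊗ₖ pauli a) := by
    rw [hbasis_eq_smul_kronecker, Complex.coe_smul, smul_comm]
  simp only [hterm, ← Finset.smul_sum]
  exact smul_right_inj Complex.I_ne_zero

theorem eq_hbasis_or_eq_neg_hbasis_of_mem_span {M N : Matrix (Fin 2) (Fin 2) ℂ}
    (hM : pauliCoord M ⬝ᵥ pauliCoord M = 1) (hN : pauliCoord N ⬝ᵥ pauliCoord N = 1)
    (h : Complex.I • (M ⊗ₖ N) ∈ Submodule.span ℝ (Set.range hbasis)) :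
    ∃ a, Complex.I • (M ⊗ₖ N) = hbasis a ∨ Complex.I • (M ⊗ₖ N) = -hbasis a := by
  obtain ⟨c, hc⟩ := (Submodule.mem_span_range_iff_exists_fun ℝ).1 h
  obtain ⟨a, ha, hoff⟩ := exists_sq_eq_one_of_vecMulVec_eq_diagonal hM hN
    (vecMulVec_pauliCoord_eq_diagonal (smul_kronecker_eq_sum_smul_hbasis_iff.1 hc.symm))
  norm_cast at ha hoff
  have hsum : ∑ b, c b • hbasis b = c a • hbasis a :=
    Fintype.sum_eq_single a fun b hb => by rw [hoff b hb, zero_smul]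
  refine ⟨a, ?_⟩
  rw [← hc, hsum]
  rcases sq_eq_one_iff.1 ha with hca | hca <;> simp [hca]

theorem of_mem_specialUnitaryGroup_fin_two_of_normSq {a b : ℂ}
    (h : Complex.normSq a + Complex.normSq b = 1) :
    !![a, b; -star b, star a] ∈ Matrix.specialUnitaryGroup (Fin 2) ℂ :=
  of_mem_specialUnitaryGroup_fin_two (by
    rw [Complex.star_def, Complex.mul_conj, Complex.mul_conj]
    exact_mod_cast h)

theorem conj_paz_of_normSq_add_normSq_eq_one {a b : ℂ}
    (h : Complex.normSq a + Complex.normSq b = 1) :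
    (!![a, b; -star b, star a])⁻¹ * paz * !![a, b; -star b, star a] =
      !![(((Complex.normSq a - Complex.normSq b) / 2 : ℝ) : ℂ), star a * b;
        star (star a * b), -((Complex.normSq a - Complex.normSq b) / 2 : ℝ)] := by
  have hinv : (!![a, b; -star b, star a])⁻¹ = star !![a, b; -star b, star a] :=
    Matrix.inv_eq_left_inv (of_mem_specialUnitaryGroup_fin_two_of_normSq h).1.1
  rw [hinv]
  ext i j
  fin_cases i <;> fin_cases j <;>
    simp [paz, Matrix.mul_apply, Matrix.star_apply, ← Complex.mul_conj] <;> ring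

-- Surjectivity of the Hopf map from the unit sphere of `ℂ²` onto the sphere of radius `1 / 2`.
theorem exists_normSq_sub_eq_and_star_mul_eq {p : ℝ} {q : ℂ}
    (h : p ^ 2 + Complex.normSq q = 1 / 4) :
    ∃ a b : ℂ, Complex.normSq a + Complex.normSq b = 1 ∧
      (Complex.normSq a - Complex.normSq b) / 2 = p ∧ star a * b = q := by
  have hp : -(1 / 2) ≤ p := by nlinarith [Complex.normSq_nonneg q]
  rcases hp.eq_or_lt with rfl | hp
  · have hq : q = 0 := Complex.normSq_eq_zero.1 (by linarith)
    exact ⟨0, 1, by simp, by norm_num, by simp [hq]⟩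
  obtain ⟨r, hr, hrp⟩ : ∃ r : ℝ, r ≠ 0 ∧ r * r = 1 / 2 + p :=
    ⟨√(1 / 2 + p), (Real.sqrt_pos.2 (by linarith)).ne', Real.mul_self_sqrt (by linarith)⟩
  have ha : Complex.normSq r = 1 / 2 + p := by rw [Complex.normSq_ofReal, hrp]
  have hb : Complex.normSq (q / r) = 1 / 2 - p := by
    rw [Complex.normSq_div, ha, div_eq_iff (by linarith)]
    linarith
  refine ⟨r, q / r, by linarith, by linarith, ?_⟩
  rw [Complex.star_def, Complex.conj_ofReal, mul_div_cancel₀ _ (Complex.ofReal_ne_zero.2 hr)]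

theorem exists_specialUnitary_conj_paz_eq {M : Matrix (Fin 2) (Fin 2) ℂ} (hM : M.IsHermitian)
    (htr : M.trace = 0) (hsq : (M * M).trace = 1 / 2) :
    ∃ k ∈ Matrix.specialUnitaryGroup (Fin 2) ℂ, k⁻¹ * paz * k = M := by
  have h00 : ((M 0 0).re : ℂ) = M 0 0 := hM.coe_re_apply_self 0
  have h10 : star (M 0 1) = M 1 0 := hM.apply 1 0
  have h11 : -M 0 0 = M 1 1 := by
    rw [Matrix.trace_fin_two] at htr
    linear_combination -htr
  have hnorm : (M 0 0).re ^ 2 + Complex.normSq (M 0 1) = 1 / 4 := by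
    rw [← Complex.ofReal_inj]
    push_cast
    rw [← Complex.mul_conj, ← Complex.star_def, h00, h10]
    simp only [Matrix.trace_fin_two, Matrix.mul_apply, Fin.sum_univ_two, ← h11] at hsq
    linear_combination hsq / 2
  obtain ⟨a, b, hab, hp, hq⟩ := exists_normSq_sub_eq_and_star_mul_eq hnorm
  refine ⟨_, of_mem_specialUnitaryGroup_fin_two_of_normSq hab, ?_⟩
  rw [conj_paz_of_normSq_add_normSq_eq_one hab, hp, hq, h00, h10, h11]
  exact M.eta_fin_two.symm

theorem exists_specialUnitary_conj_paz_eq_pauli (a : Fin 3) :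
    ∃ k ∈ Matrix.specialUnitaryGroup (Fin 2) ℂ, k⁻¹ * paz * k = pauli a :=
  exists_specialUnitary_conj_paz_eq (isHermitian_pauli a) (trace_pauli a)
    (by rw [trace_pauli_mul_pauli, if_pos rfl])

theorem exists_specialUnitary_conj_paz_eq_neg_pauli (a : Fin 3) :
    ∃ k ∈ Matrix.specialUnitaryGroup (Fin 2) ℂ, k⁻¹ * paz * k = -pauli a :=
  exists_specialUnitary_conj_paz_eq (isHermitian_pauli a).neg
    (by rw [Matrix.trace_neg, trace_pauli, neg_zero])
    (by rw [neg_mul_neg, trace_pauli_mul_pauli, if_pos rfl])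

theorem mem_adOrbitIzSz_iff {A : Matrix (Fin 2 × Fin 2) (Fin 2 × Fin 2) ℂ} :
    A ∈ adOrbitIzSz ↔ ∃ k₁ ∈ Matrix.specialUnitaryGroup (Fin 2) ℂ,
      ∃ k₂ ∈ Matrix.specialUnitaryGroup (Fin 2) ℂ,
        A = Complex.I • ((k₁⁻¹ * paz * k₁) ⊗ₖ (k₂⁻¹ * paz * k₂)) := by
  have hconj (k₁ k₂ : Matrix (Fin 2) (Fin 2) ℂ) :
      (k₁ ⊗ₖ k₂)⁻¹ * (Complex.I • (Iz' * Sz')) * (k₁ ⊗ₖ k₂) =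
        Complex.I • ((k₁⁻¹ * paz * k₁) ⊗ₖ (k₂⁻¹ * paz * k₂)) := by
    change (k₁ ⊗ₖ k₂)⁻¹ * hbasis 2 * (k₁ ⊗ₖ k₂) = _
    rw [hbasis_eq_smul_kronecker, Matrix.inv_kronecker, Matrix.mul_smul, Matrix.smul_mul,
      ← Matrix.mul_kronecker_mul, ← Matrix.mul_kronecker_mul]
    rfl
  simp only [adOrbitIzSz, Set.mem_ofPred_eq, hconj]

theorem hbasis_mem_adOrbitIzSz (a : Fin 3) : hbasis a ∈ adOrbitIzSz := by
  obtain ⟨k, hk, hka⟩ := exists_specialUnitary_conj_paz_eq_pauli a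
  exact mem_adOrbitIzSz_iff.2 ⟨k, hk, k, hk, by rw [hka, hbasis_eq_smul_kronecker]⟩

theorem neg_hbasis_mem_adOrbitIzSz (a : Fin 3) : -hbasis a ∈ adOrbitIzSz := by
  obtain ⟨k, hk, hka⟩ := exists_specialUnitary_conj_paz_eq_pauli a
  obtain ⟨l, hl, hla⟩ := exists_specialUnitary_conj_paz_eq_neg_pauli a
  refine mem_adOrbitIzSz_iff.2 ⟨l, hl, k, hk, ?_⟩
  rw [hla, hka, hbasis_eq_smul_kronecker, ← neg_one_smul ℂ (pauli a), Matrix.smul_kronecker,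
    neg_one_smul, smul_neg]

/- STATEMENT 15 (Weyl orbit of `I_zS_z`): the intersection of the adjoint orbit of
`iI_zS_z` with `𝔥 = span_ℝ{iI_xS_x, iI_yS_y, iI_zS_z}` is exactly
`{±iI_xS_x, ±iI_yS_y, ±iI_zS_z}`. -/
theorem stmt_15 :
    adOrbitIzSz ∩
      (Submodule.span ℝ ({hbasis 0, hbasis 1, hbasis 2} :
        Set (Matrix (Fin 2 × Fin 2) (Fin 2 × Fin 2) ℂ)) :
          Set (Matrix (Fin 2 × Fin 2) (Fin 2 × Fin 2) ℂ)) =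
      {hbasis 0, -hbasis 0, hbasis 1, -hbasis 1, hbasis 2, -hbasis 2} := by
  rw [← range_fin_three, ← setOf_exists_eq_or_eq_neg_fin_three]
  ext A
  constructor
  · rintro ⟨horbit, hspan⟩
    obtain ⟨k₁, hk₁, k₂, hk₂, rfl⟩ := mem_adOrbitIzSz_iff.1 horbit
    exact eq_hbasis_or_eq_neg_hbasis_of_mem_span
      (pauliCoord_conj_paz_dotProduct_self (isUnit_of_mem_specialUnitaryGroup hk₁))
      (pauliCoord_conj_paz_dotProduct_self (isUnit_of_mem_specialUnitaryGroup hk₂)) hspan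
  · have hbasis_mem (a : Fin 3) : hbasis a ∈ Submodule.span ℝ (Set.range hbasis) :=
      Submodule.subset_span (Set.mem_range_self a)
    rintro ⟨a, rfl | rfl⟩
    · exact ⟨hbasis_mem_adOrbitIzSz a, hbasis_mem a⟩
    · exact ⟨neg_hbasis_mem_adOrbitIzSz a, neg_mem (hbasis_mem a)⟩
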